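/- arXiv:0705.3065 — 8 statements merged into one kernel-verified Lean document; each statement's English description precedes it below -/
import Mathlib

section
/- For every integer r ≥ 1 and all natural numbers n and k, the Euler coefficient satisfies ⟨n choose k⟩_r = ∑_{i=0}^{⌊k/r⌋} (-1)^i · C(n,i) · C(n+k-ri-1, k-ri), where C denotes the ordinary binomial coefficient and the identity is an identity of integers. -/
/-- The Euler coefficient `⟨n choose k⟩_r`: the coefficient of `t^k` in the
polynomial `(1 + t + t^2 + ⋯ + t^(r-1))^n`, viewed as an integer. -/
noncomputable def eulerCoeff (r n k : ℕ) : ℤ :=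
  ((∑ i ∈ Finset.range r, (Polynomial.X : Polynomial ℤ) ^ i) ^ n).coeff k

lemma euler_aux_series (r m : ℕ) :
    (∑ i ∈ Finset.range r, (PowerSeries.X : PowerSeries ℤ) ^ i) ^ (m + 1) =
      ∑ i ∈ Finset.range (m + 1 + 1), PowerSeries.C ((-1 : ℤ) ^ i * ((m + 1).choose i : ℤ)) *
        (PowerSeries.X ^ (r * i) * (PowerSeries.invOneSubPow ℤ (m + 1)).val) := by
  have h1 : (∑ i ∈ Finset.range r, (PowerSeries.X : PowerSeries ℤ) ^ i) * (1 - PowerSeries.X)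
      = 1 - PowerSeries.X ^ r := geom_sum_mul_neg _ _
  have h2 : (1 - PowerSeries.X : PowerSeries ℤ) ^ (m + 1) *
      (PowerSeries.invOneSubPow ℤ (m + 1)).val = 1 := by
    rw [← PowerSeries.invOneSubPow_inv_eq_one_sub_pow]
    exact (PowerSeries.invOneSubPow ℤ (m + 1)).inv_val
  have h3 : (1 - PowerSeries.X ^ r : PowerSeries ℤ) ^ (m + 1) =
      ∑ i ∈ Finset.range (m + 1 + 1), PowerSeries.C ((-1 : ℤ) ^ i * ((m + 1).choose i : ℤ)) *
        PowerSeries.X ^ (r * i) := by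
    rw [sub_eq_neg_add, add_pow]
    refine Finset.sum_congr rfl fun i _ => ?_
    rw [neg_pow, pow_mul]
    simp
    ring
  calc _ = (∑ i ∈ Finset.range r, (PowerSeries.X : PowerSeries ℤ) ^ i) ^ (m + 1) *
        ((1 - PowerSeries.X : PowerSeries ℤ) ^ (m + 1) *
      (PowerSeries.invOneSubPow ℤ (m + 1)).val) := by rw [h2, mul_one]
    _ = _ := by
      rw [← mul_assoc, ← mul_pow, h1, h3, Finset.sum_mul]
      exact Finset.sum_congr rfl fun i _ => mul_assoc _ _ _

theorem euler_coeff_eq_alternating_sum (r : ℕ) (hr : 1 ≤ r) (n k : ℕ) :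
    eulerCoeff r n k =
      ∑ i ∈ Finset.range (k / r + 1),
        (-1 : ℤ) ^ i * (n.choose i : ℤ) * ((n + k - r * i - 1).choose (k - r * i) : ℤ) := by
  rcases n with _ | m
  · rw [Finset.sum_eq_single_of_mem 0 (by simp)]
    · rcases k with _ | k
      · simp [eulerCoeff]
      · simp [eulerCoeff, Polynomial.coeff_one]
    · intro b _ hb
      rw [Nat.choose_eq_zero_of_lt (Nat.pos_of_ne_zero hb)]
      simp
  · have h0 : eulerCoeff r (m + 1) k = PowerSeries.coeff k
        ((∑ i ∈ Finset.range r, (PowerSeries.X : PowerSeries ℤ) ^ i) ^ (m + 1)) := by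
      have : (∑ i ∈ Finset.range r, (PowerSeries.X : PowerSeries ℤ) ^ i) =
          ((∑ i ∈ Finset.range r, (Polynomial.X : Polynomial ℤ) ^ i : Polynomial ℤ) :
            PowerSeries ℤ) := by
        rw [← Polynomial.coeToPowerSeries.ringHom_apply, map_sum]
        simp
      rw [eulerCoeff, this, ← Polynomial.coe_pow, Polynomial.coeff_coe]
    rw [h0, euler_aux_series, map_sum]
    simp only [PowerSeries.coeff_C_mul, PowerSeries.coeff_X_pow_mul',
      PowerSeries.invOneSubPow_val_succ_eq_mk_add_choose, PowerSeries.coeff_mk]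
    have key : ∀ i, (-1 : ℤ) ^ i * ((m + 1).choose i : ℤ) *
        (if r * i ≤ k then (((m + (k - r * i)).choose m : ℕ) : ℤ) else 0) =
        if i ∈ Finset.range (k / r + 1) then (-1 : ℤ) ^ i * ((m + 1).choose i : ℤ) *
          ((m + 1 + k - r * i - 1).choose (k - r * i) : ℤ) else 0 := by
      intro i
      have hi : i ∈ Finset.range (k / r + 1) ↔ r * i ≤ k := by
        rw [Finset.mem_range, Nat.lt_succ_iff, Nat.le_div_iff_mul_le hr, mul_comm]
      simp only [hi]
      split_ifs with h
      · rw [show m + 1 + k - r * i - 1 = m + (k - r * i) by omega, Nat.choose_symm_add]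
      · simp
    rw [Finset.sum_congr rfl fun i _ => key i, ← Finset.sum_filter]
    apply Finset.sum_subset_zero_on_sdiff
    · intro i hi
      exact (Finset.mem_filter.mp hi).2
    · intro i hi
      simp only [Finset.mem_sdiff, Finset.mem_filter, not_and] at hi
      have : m + 1 < i := by
        by_contra h
        exact hi.2 (Finset.mem_range.mpr (by omega)) hi.1
      rw [Nat.choose_eq_zero_of_lt this]
      simp
    · intro i _
      rfl
end

section
/- For every integer r ≥ 2 and every natural number n, the Euler coefficient ⟨n+1 choose n⟩_r is divisible by n+1 and satisfies ⟨n+1 choose n⟩_r = (n+1) · ( ⟨n choose n⟩_r − ∑_{i=1}^{r-2} i · ⟨n choose n-i-1⟩_r ), where terms with n-i-1 < 0 are taken to be 0 (the identity being an identity of integers). -/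
open Polynomial in
theorem aux_poly (s : ℕ) :
    (∑ i ∈ Finset.range (s + 2), (X : ℤ[X]) ^ i)
      - X * derivative (∑ i ∈ Finset.range (s + 2), (X : ℤ[X]) ^ i)
      = 1 - ∑ i ∈ Finset.Icc 1 s, C (i : ℤ) * X ^ (i + 1) := by
  induction s with
  | zero => simp [Finset.sum_range_succ]
  | succ s ih =>
    rw [Finset.sum_range_succ, Finset.sum_Icc_succ_top (by omega), derivative_add, mul_add,
      ← sub_sub, ← sub_sub, ← ih, derivative_X_pow]
    simp only [Nat.cast_add, Nat.cast_one, Nat.cast_ofNat, map_add, map_one, map_natCast,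
      Nat.add_sub_cancel, show s + 2 - 1 = s + 1 from rfl, C_eq_intCast, Int.cast_natCast]
    push_cast
    simp only [map_ofNat]
    ring

open Polynomial in
theorem aux_coeff (P : ℤ[X]) (n : ℕ) :
    (P ^ (n + 1)).coeff n = ((n : ℤ) + 1) * (P ^ n * (P - X * derivative P)).coeff n := by
  have h : X * derivative (P ^ (n + 1)) = C ((n : ℤ) + 1) * (P ^ n * (X * derivative P)) := by
    rw [derivative_pow_succ]
    ring
  have h2 : (X * derivative (P ^ (n + 1))).coeff n = n * (P ^ (n + 1)).coeff n := by
    cases n with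
    | zero => simp
    | succ m => rw [coeff_X_mul, coeff_derivative]; push_cast; ring
  rw [h, coeff_C_mul] at h2
  rw [mul_sub, coeff_sub, mul_sub, h2, ← pow_succ]
  ring

open Polynomial in
theorem euler_coeff_dvd_and_catalan_like (r : ℕ) (hr : 2 ≤ r) (n : ℕ) :
    ((n : ℤ) + 1) ∣ eulerCoeff r (n + 1) n ∧
    eulerCoeff r (n + 1) n =
      ((n : ℤ) + 1) *
        (eulerCoeff r n n -
          ∑ i ∈ Finset.Icc 1 (r - 2),
            (i : ℤ) * (if i + 1 ≤ n then eulerCoeff r n (n - i - 1) else 0)) := by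
  have key : eulerCoeff r (n + 1) n =
      ((n : ℤ) + 1) *
        (eulerCoeff r n n -
          ∑ i ∈ Finset.Icc 1 (r - 2),
            (i : ℤ) * (if i + 1 ≤ n then eulerCoeff r n (n - i - 1) else 0)) := by
    obtain ⟨s, rfl⟩ : ∃ s, r = s + 2 := ⟨r - 2, by omega⟩
    unfold eulerCoeff
    rw [aux_coeff, aux_poly, mul_sub, coeff_sub, mul_one, Finset.mul_sum, finset_sum_coeff,
      Nat.add_sub_cancel]
    congr 2
    refine Finset.sum_congr rfl fun i _ => ?_
    rw [mul_left_comm, coeff_C_mul, coeff_mul_X_pow', Nat.sub_sub]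
  exact ⟨⟨_, key⟩, key⟩
end

section
/- For every natural number n ≥ 1, the n-th Catalan number satisfies C_n = C(2n-1, n) − ∑_{i=1}^{n-1} i · C(2n-i-2, n-1), where C(a,b) denotes the ordinary binomial coefficient. -/
theorem aux_T (m k : ℕ) :
    ∑ i ∈ Finset.range (k + 1), (m + k - i).choose m = (m + k + 1).choose (m + 1) := by
  induction k with
  | zero => simp
  | succ k ih =>
    rw [Finset.sum_range_succ']
    have h : ∀ i, m + (k + 1) - (i + 1) = m + k - i := fun i => by omega
    simp only [h, ih]
    rw [show m + (k + 1) + 1 = (m + k + 1) + 1 by ring, Nat.choose_succ_succ (m + k + 1) m,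
      Nat.sub_zero, show m + (k + 1) = m + k + 1 by ring, add_comm]

theorem aux_S (m k : ℕ) :
    ∑ i ∈ Finset.range (k + 1), i * (m + k - i).choose m = (m + k + 1).choose (m + 2) := by
  induction k with
  | zero => simp
  | succ k ih =>
    rw [Finset.sum_range_succ']
    have h : ∀ i, m + (k + 1) - (i + 1) = m + k - i := fun i => by omega
    simp only [h, add_mul, Finset.sum_add_distrib, ih, one_mul, aux_T, zero_mul, add_zero]
    rw [show m + (k + 1) + 1 = (m + k + 1) + 1 by ring, Nat.choose_succ_succ (m + k + 1) (m + 1),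
      add_comm]

theorem catalan_eq_choose_sub_sum (n : ℕ) (hn : 1 ≤ n) :
    (catalan n : ℤ) =
      ((2 * n - 1).choose n : ℤ) -
        ∑ i ∈ Finset.Icc 1 (n - 1), (i : ℤ) * ((2 * n - i - 2).choose (n - 1) : ℤ) := by
  obtain ⟨m, rfl⟩ : ∃ m, n = m + 1 := ⟨n - 1, by omega⟩
  have hS : ∑ i ∈ Finset.Icc 1 (m + 1 - 1), (i : ℤ) *
      ((2 * (m + 1) - i - 2).choose (m + 1 - 1) : ℤ) = ((2 * m + 1).choose (m + 2) : ℤ) := by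
    have h := aux_S m m
    rw [show m + m + 1 = 2 * m + 1 by ring] at h
    rw [← h]
    push_cast
    have h2 : ∀ i, 2 * (m + 1) - i - 2 = m + m - i := fun i => by omega
    simp only [h2]
    apply Finset.sum_subset
    · intro i hi
      simp only [Finset.mem_Icc, Finset.mem_range] at *
      omega
    · intro i hi hi'
      simp only [Finset.mem_Icc, Finset.mem_range] at *
      have : i = 0 := by omega
      simp [this]
  rw [hS, show 2 * (m + 1) - 1 = 2 * m + 1 by omega]
  have h1 := succ_mul_catalan_eq_centralBinom (m + 1)
  rw [Nat.centralBinom, show 2 * (m + 1) = 2 * m + 1 + 1 by ring, Nat.choose_succ_succ,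
    Nat.succ_eq_add_one, ← Nat.choose_symm_half] at h1
  have h3 := Nat.choose_succ_right_eq (2 * m + 1) (m + 1)
  rw [show 2 * m + 1 - (m + 1) = m by omega] at h3
  zify at h1 h3
  have h4 : ((m : ℤ) + 2) ≠ 0 := by positivity
  apply mul_left_cancel₀ h4
  linear_combination h1 + h3
end

section
/- For every integer r ≥ 1 and all integers m ≥ n > 0, the ballot path counts avoiding r consecutive E-steps satisfy the recurrence s_n(m;r) = s_{n-1}(m;r) + s_n(m-1;r) − s_{n-r}(m-1;r), where s_j(i;r) is taken to be 0 whenever j < 0 or i < j. -/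
/-- A word in steps `N = true` (up, `(0,1)`) and `E = false` (right, `(1,0)`) is a
ballot word when every prefix has at least as many `N`-steps as `E`-steps,
i.e. the corresponding lattice path from `(0,0)` stays weakly above `y = x`. -/
def IsBallot (p : List Bool) : Prop :=
  ∀ q : List Bool, q <+: p → q.count false ≤ q.count true

/-- `sCount r n m` is the number of ballot paths from `(0,0)` to `(n,m)`
(with `n` east-steps and `m` north-steps, staying weakly above `y = x`)
containing no `r` consecutive east-steps. -/
noncomputable def sCount (r n m : ℕ) : ℕ :=
  Set.ncard {p : List Bool |
    p.count false = n ∧ p.count true = m ∧ IsBallot p ∧ ¬ List.replicate r false <:+: p}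

/-- The extension of the path counts to integer indices, taken to be `0`
whenever `n < 0` or `m < n`. -/
noncomputable def sZ (r : ℕ) (n m : ℤ) : ℤ :=
  if 0 ≤ n ∧ n ≤ m then sCount r n.toNat m.toNat else 0

def sSet (r n m : ℕ) : Set (List Bool) := {p : List Bool |
    p.count false = n ∧ p.count true = m ∧ IsBallot p ∧ ¬ List.replicate r false <:+: p}

lemma sSet_finite (r n m : ℕ) : (sSet r n m).Finite := by
  refine (List.finite_length_eq Bool (n + m)).subset ?_
  rintro p ⟨h1, h2, -, -⟩
  have := List.count_true_add_count_false (l := p)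
  simp only [Set.mem_setOf_eq]
  omega

lemma isBallot_concat (p : List Bool) (b : Bool) :
    IsBallot (p ++ [b]) ↔ IsBallot p ∧ (p ++ [b]).count false ≤ (p ++ [b]).count true := by
  constructor
  · intro h
    exact ⟨fun q hq => h q (hq.trans (List.prefix_append _ _)), h _ (List.prefix_refl _)⟩
  · rintro ⟨h1, h2⟩ q hq
    rcases List.prefix_concat_iff.1 hq with h | h
    · rw [h]; exact h2
    · exact h1 q h

lemma IsBallot.le {p : List Bool} (h : IsBallot p) : p.count false ≤ p.count true :=
  h p (List.prefix_refl _)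

lemma isBallot_rep (p : List Bool) (k : ℕ) (h : IsBallot p)
    (hc : p.count false + k ≤ p.count true) : IsBallot (p ++ List.replicate k false) := by
  induction k with
  | zero => simpa using h
  | succ k ih =>
    rw [List.replicate_succ', ← List.append_assoc, isBallot_concat]
    refine ⟨ih (by omega), ?_⟩
    simp [List.count_append, List.count_replicate]
    omega

lemma pre_rep (r k : ℕ) (q : List Bool) :
    List.replicate r false <+: List.replicate k false ++ true :: q ↔ r ≤ k := by
  induction r generalizing k with
  | zero => simp
  | succ r ih =>
    cases k with
    | zero => simp [List.replicate_succ]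
    | succ k => simp [List.replicate_succ, ih]

lemma suf_rep (r k : ℕ) (q : List Bool) :
    List.replicate r false <:+ q ++ [true] ++ List.replicate k false ↔ r ≤ k := by
  rw [← List.reverse_prefix]
  simp [pre_rep]

lemma inf_rep (r k : ℕ) (hr : 1 ≤ r) (q : List Bool) :
    List.replicate r false <:+: q ++ [true] ++ List.replicate k false ↔
      List.replicate r false <:+: q ∨ r ≤ k := by
  induction k with
  | zero =>
    have := suf_rep r 0 q
    simp only [List.replicate_zero, List.append_nil] at this ⊢
    rw [List.infix_concat_iff, this]
    tauto
  | succ k ih =>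
    have := suf_rep r (k+1) q
    rw [List.replicate_succ' (n := k), ← List.append_assoc] at this ⊢
    rw [List.infix_concat_iff, this, ih]
    constructor
    · rintro (h | h | h)
      · right; exact h
      · left; exact h
      · right; omega
    · rintro (h | h)
      · right; left; exact h
      · left; exact h

lemma main_eq (r n m : ℕ) (hr : 1 ≤ r) (hm : n ≤ m) :
    sSet r (n+1) (m+1) ∪
      (fun q => q ++ [true] ++ List.replicate r false) ''
        {q | q ∈ sSet r (n + 1 - r) m ∧ r ≤ n + 1} =
    (fun p => p ++ [false]) '' sSet r n (m+1) ∪ (fun p => p ++ [true]) '' sSet r (n+1) m := by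
  have avT : ∀ p : List Bool, List.replicate r false <:+: p ++ [true] ↔
      List.replicate r false <:+: p := by
    intro p
    have := inf_rep r 0 hr p
    simp only [List.replicate_zero, List.append_nil] at this
    rw [this]
    constructor
    · rintro (h | h)
      · exact h
      · omega
    · exact Or.inl
  obtain ⟨k, rfl⟩ : ∃ k, r = k + 1 := ⟨r - 1, by omega⟩
  ext x
  constructor
  · rintro (⟨h1, h2, h3, h4⟩ | ⟨q, ⟨⟨h1, h2, h3, h4⟩, h5⟩, rfl⟩)
    · rcases List.eq_nil_or_concat' x with rfl | ⟨p, b, rfl⟩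
      · simp at h1
      · have h3' := (isBallot_concat _ _).1 h3
        cases b with
        | false =>
          left
          refine ⟨p, ⟨by simpa using h1, by simpa using h2, h3'.1, fun h => h4 ?_⟩, rfl⟩
          exact h.trans (List.prefix_append _ _).isInfix
        | true =>
          right
          refine ⟨p, ⟨by simpa using h1, by simpa using h2, h3'.1, fun h => h4 ?_⟩, rfl⟩
          exact h.trans (List.prefix_append _ _).isInfix
    · left
      refine ⟨q ++ [true] ++ List.replicate k false, ⟨?_, ?_, ?_, ?_⟩, ?_⟩
      · simp [List.count_append, List.count_replicate]; omega
      · simp [List.count_append, List.count_replicate]; omega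
      · apply isBallot_rep
        · rw [isBallot_concat]
          refine ⟨h3, ?_⟩
          have := h3.le
          simp [List.count_append]; omega
        · simp [List.count_append]; omega
      · rw [inf_rep _ _ hr]
        rintro (h | h)
        · exact h4 h
        · omega
      · simp [List.replicate_succ']
  · rintro (⟨p, ⟨h1, h2, h3, h4⟩, rfl⟩ | ⟨p, ⟨h1, h2, h3, h4⟩, rfl⟩)
    · by_cases h : List.replicate (k+1) false <:+: p ++ [false]
      · right
        rcases List.infix_concat_iff.1 h with h | h
        swap
        · exact absurd h h4
        obtain ⟨t, ht⟩ := h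
        rw [List.replicate_succ', ← List.append_assoc] at ht
        have hp := List.append_cancel_right ht
        subst hp
        rcases List.eq_nil_or_concat' t with rfl | ⟨q, b, rfl⟩
        · simp [List.count_replicate] at h2
        · cases b with
          | false =>
            exfalso; apply h4
            refine ⟨q, [], ?_⟩
            simp [List.replicate_succ]
          | true =>
            simp [List.count_append, List.count_replicate] at h1 h2
            refine ⟨q, ⟨⟨by omega, by omega, ?_, ?_⟩, by omega⟩, ?_⟩
            · intro s hs
              apply h3
              rw [List.append_assoc]
              exact hs.trans (List.prefix_append _ _)
            · intro h
              apply h4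
              rw [inf_rep _ _ hr]
              exact Or.inl h
            · simp [List.replicate_succ']
      · left
        refine ⟨by simp [h1], by simp [h2], ?_, h⟩
        rw [isBallot_concat]
        refine ⟨h3, ?_⟩
        simp [h1, h2]; omega
    · left
      refine ⟨by simp [h1], by simp [h2], ?_, by rw [avT]; exact h4⟩
      rw [isBallot_concat]
      refine ⟨h3, ?_⟩
      have := h3.le
      simp; omega

lemma main_count (r n m : ℕ) (hr : 1 ≤ r) (hm : n ≤ m) :
    sCount r (n+1) (m+1) + (if r ≤ n + 1 then sCount r (n + 1 - r) m else 0) =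
      sCount r n (m+1) + sCount r (n+1) m := by
  have key := congrArg Set.ncard (main_eq r n m hr hm)
  have fin3 : {q | q ∈ sSet r (n + 1 - r) m ∧ r ≤ n + 1}.Finite :=
    (sSet_finite r (n+1-r) m).subset (fun q hq => hq.1)
  rw [Set.ncard_union_eq ?_ (sSet_finite _ _ _) (fin3.image _),
    Set.ncard_union_eq ?_ ((sSet_finite _ _ _).image _) ((sSet_finite _ _ _).image _),
    Set.ncard_image_of_injective _ (fun a b h => by simpa using h),
    Set.ncard_image_of_injective _ (fun a b h => by simpa using h),
    Set.ncard_image_of_injective _ (fun a b h => by simpa using h)] at key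
  · have e : {q | q ∈ sSet r (n + 1 - r) m ∧ r ≤ n + 1}.ncard =
        if r ≤ n + 1 then sCount r (n + 1 - r) m else 0 := by
      split_ifs with h
      · simp only [h, and_true]; rfl
      · simp [h]
    rw [e] at key
    exact key
  · rw [Set.disjoint_left]
    rintro _ ⟨p, -, rfl⟩ ⟨q, -, h⟩
    simp at h
  · rw [Set.disjoint_left]
    rintro _ ⟨-, -, -, h4⟩ ⟨q, -, rfl⟩
    exact h4 (List.suffix_append _ _).isInfix

lemma sCount_zero (r n m : ℕ) (h : m < n) : sCount r n m = 0 := by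
  unfold sCount
  convert Set.ncard_empty (List Bool)
  ext p
  simp only [Set.mem_setOf_eq, Set.mem_empty_iff_false, iff_false]
  rintro ⟨h1, h2, h3, -⟩
  have := h3.le
  omega

lemma sZ_nat (r n m : ℕ) : sZ r n m = sCount r n m := by
  unfold sZ
  split_ifs with h
  · simp
  · rw [sCount_zero]; · simp
    omega

theorem sCount_recurrence (r : ℕ) (hr : 1 ≤ r) (n m : ℤ) (hn : 0 < n) (hm : n ≤ m) :
    sZ r n m = sZ r (n - 1) m + sZ r n (m - 1) - sZ r (n - r) (m - 1) := by
  obtain ⟨a, rfl⟩ : ∃ a : ℕ, n = ((a + 1 : ℕ) : ℤ) := ⟨(n - 1).toNat, by omega⟩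
  obtain ⟨b, rfl⟩ : ∃ b : ℕ, m = ((b + 1 : ℕ) : ℤ) := ⟨(m - 1).toNat, by omega⟩
  have key := main_count r a b hr (by omega)
  have e1 : ((a + 1 : ℕ) : ℤ) - 1 = (a : ℕ) := by omega
  have e2 : ((b + 1 : ℕ) : ℤ) - 1 = (b : ℕ) := by omega
  rw [e1, e2, sZ_nat, sZ_nat, sZ_nat]
  have e3 : sZ r (((a + 1 : ℕ) : ℤ) - r) b =
      ((if r ≤ a + 1 then sCount r (a + 1 - r) b else 0 : ℕ) : ℤ) := by
    split_ifs with h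
    · rw [← Nat.cast_sub h, sZ_nat]
    · unfold sZ
      rw [if_neg (by omega)]; rfl
  rw [e3]
  omega
end

section
/- For every integer r ≥ 1 and every natural number n, the number of Dyck-type paths from (0,0) to (2n,0) staying weakly above the x-axis and containing no r consecutive down-steps, multiplied by n+1, equals the Euler coefficient ⟨n+1 choose n⟩_r. -/
/-- `dyckCount r a b` is the number of lattice paths from `(0,0)` to `(a+b, a-b)`
(encoded as words in `true` = up-step `(1,1)` and `false` = down-step `(1,-1)`,
with `a` up-steps and `b` down-steps) that stay weakly above the `x`-axis and
contain no `r` consecutive down-steps. -/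
noncomputable def dyckCount (r a b : ℕ) : ℕ :=
  Set.ncard {p : List Bool |
    p.count true = a ∧ p.count false = b ∧
    (∀ q : List Bool, q <+: p → q.count false ≤ q.count true) ∧
    ¬ List.replicate r false <:+: p}

def dyckF (r : ℕ) : ℕ → ℕ → Finset (List Bool)
  | 0, b => if b = 0 then {[]} else ∅
  | a + 1, b => if b ≤ a + 1 then
      ((Finset.range r).filter (· ≤ b)).biUnion fun k =>
        (dyckF r a (b - k)).image fun q => q ++ true :: List.replicate k false
    else ∅

lemma dyck_decomp (p : List Bool) (h : 0 < p.count true) :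
    ∃ q k, p = q ++ true :: List.replicate k false := by
  induction p using List.reverseRecOn with
  | nil => simp at h
  | append_singleton p x ih =>
    cases x with
    | true => exact ⟨p, 0, by simp⟩
    | false =>
      obtain ⟨q, k, rfl⟩ := ih (by simpa using h)
      exact ⟨q, k + 1, by simp [List.replicate_succ']⟩

lemma dyck_inj (q q' : List Bool) (k k' : ℕ)
    (h : q ++ true :: List.replicate k false = q' ++ true :: List.replicate k' false) :
    k = k' ∧ q = q' := by
  induction k generalizing k' with
  | zero =>
    cases k' with
    | zero => simpa using h
    | succ k' =>
      have := congrArg List.getLast? h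
      simp only [List.replicate_succ', List.replicate_zero, ← List.cons_append,
        ← List.append_assoc, List.getLast?_concat] at this
      simp at this
  | succ k ih =>
    cases k' with
    | zero =>
      have := congrArg List.getLast? h
      simp only [List.replicate_succ', List.replicate_zero, ← List.cons_append,
        ← List.append_assoc, List.getLast?_concat] at this
      simp at this
    | succ k' =>
      have := congrArg List.dropLast h
      simp only [List.replicate_succ', ← List.cons_append, ← List.append_assoc,
        List.dropLast_concat] at this
      obtain ⟨h1, h2⟩ := ih k' this
      exact ⟨by omega, h2⟩

lemma dyck_prefix (q : List Bool) (k : ℕ) :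
    (∀ l : List Bool, l <+: q ++ true :: List.replicate k false → l.count false ≤ l.count true) ↔
    (∀ l : List Bool, l <+: q → l.count false ≤ l.count true) ∧
      q.count false + k ≤ q.count true + 1 := by
  constructor
  · intro h
    refine ⟨fun l hl => h l (hl.trans (List.prefix_append _ _)), ?_⟩
    have := h _ List.prefix_rfl
    simpa [List.count_replicate] using this
  · rintro ⟨h1, h2⟩ l hl
    rcases List.prefix_or_prefix_of_prefix hl (List.prefix_append q _) with hl' | ⟨t, rfl⟩
    · exact h1 l hl'
    · have ht := (List.prefix_append_right_inj q).1 hl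
      rw [List.prefix_cons_iff] at ht
      rcases ht with rfl | ⟨t, rfl, ht⟩
      · simpa using h1 q List.prefix_rfl
      · rw [List.prefix_replicate_iff] at ht
        obtain ⟨hk, ht⟩ := ht
        rw [ht]
        simp [List.count_replicate]
        omega

lemma dyck_rep_prefix (q t : List Bool) (r : ℕ)
    (h : List.replicate r false <+: q ++ true :: t) : List.replicate r false <+: q := by
  induction q generalizing r with
  | nil =>
    cases r with
    | zero => simp
    | succ r => simp [List.replicate_succ] at h
  | cons x q ih =>
    cases r with
    | zero => simp
    | succ r =>
      simp only [List.replicate_succ, List.cons_append, List.cons_prefix_cons] at h ⊢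
      exact ⟨h.1, ih r h.2⟩

lemma dyck_infix (q : List Bool) (k r : ℕ) :
    List.replicate r false <:+: q ++ true :: List.replicate k false ↔
      List.replicate r false <:+: q ∨ r ≤ k := by
  constructor
  · intro h
    induction q with
    | nil =>
      right
      simp only [List.nil_append, List.infix_cons_iff] at h
      rcases h with h | h
      · cases r with
        | zero => simp
        | succ r => simp [List.replicate_succ] at h
      · simpa using h.length_le
    | cons x q ih =>
      rw [List.cons_append, List.infix_cons_iff] at h
      rcases h with h | h
      · left
        exact (dyck_rep_prefix (x :: q) _ r h).isInfix
      · rcases ih h with h | h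
        · exact Or.inl (List.infix_cons_iff.2 (Or.inr h))
        · exact Or.inr h
  · rintro (h | h)
    · exact h.trans (List.prefix_append _ _).isInfix
    · refine ⟨q ++ true :: List.replicate (k - r) false, [], ?_⟩
      simp [h]

lemma dyck_mem (r : ℕ) (hr : 1 ≤ r) (a b : ℕ) (p : List Bool) :
    p ∈ dyckF r a b ↔ p.count true = a ∧ p.count false = b ∧
    (∀ q : List Bool, q <+: p → q.count false ≤ q.count true) ∧
    ¬ List.replicate r false <:+: p := by
  induction a generalizing b p with
  | zero =>
    unfold dyckF
    constructor
    · intro h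
      split_ifs at h with hb
      · simp only [Finset.mem_singleton] at h
        subst h
        simp [hb]
        omega
      · simp at h
    · rintro ⟨h1, h2, h3, h4⟩
      have h5 := h3 p List.prefix_rfl
      have hb : b = 0 := by omega
      have hl : p.count true + p.count false = p.length := by
        simpa using List.count_not_add_count p false
      have : p = [] := List.length_eq_zero_iff.1 (by omega)
      simp [hb, this]
  | succ a ih =>
    unfold dyckF
    constructor
    · intro h
      split_ifs at h with hb
      · simp only [Finset.mem_biUnion, Finset.mem_image, Finset.mem_filter, Finset.mem_range] at h
        obtain ⟨k, ⟨hk, hkb⟩, q, hq, rfl⟩ := h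
        rw [ih] at hq
        obtain ⟨h1, h2, h3, h4⟩ := hq
        rw [dyck_prefix, dyck_infix]
        refine ⟨by simp [h1, List.count_replicate], ?_, ⟨h3, by omega⟩, ?_⟩
        · simp [h2, List.count_replicate]; omega
        · rintro (h | h)
          · exact h4 h
          · omega
      · simp at h
    · rintro ⟨h1, h2, h3, h4⟩
      obtain ⟨q, k, rfl⟩ := dyck_decomp p (by omega)
      rw [dyck_prefix] at h3
      rw [dyck_infix] at h4
      push Not at h4
      simp [List.count_replicate] at h1 h2
      rw [if_pos (by omega)]
      simp only [Finset.mem_biUnion, Finset.mem_image, Finset.mem_filter, Finset.mem_range]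
      refine ⟨k, ⟨h4.2, by omega⟩, q, ?_, rfl⟩
      rw [ih]
      exact ⟨h1, by omega, h3.1, h4.1⟩

lemma dyck_card_succ (r a b : ℕ) (hb : b ≤ a + 1) :
    (dyckF r (a + 1) b).card =
      ∑ k ∈ Finset.range r, if k ≤ b then (dyckF r a (b - k)).card else 0 := by
  rw [dyckF, if_pos hb, Finset.card_biUnion, Finset.sum_filter]
  · refine Finset.sum_congr rfl fun k _ => ?_
    split_ifs
    · exact Finset.card_image_of_injective _ fun q q' h => (dyck_inj q q' k k h).2
    · rfl
  · intro k _ k' _ hkk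
    rw [Function.onFun, Finset.disjoint_left]
    intro p hp hp'
    simp only [Finset.mem_image] at hp hp'
    obtain ⟨q, _, rfl⟩ := hp
    obtain ⟨q', _, h⟩ := hp'
    exact hkk (dyck_inj q' q k' k h).1.symm

lemma euler_succ (r m s : ℕ) : eulerCoeff r (m + 1) s =
    ∑ k ∈ Finset.range r, if k ≤ s then eulerCoeff r m (s - k) else 0 := by
  unfold eulerCoeff
  rw [pow_succ', Finset.sum_mul, Polynomial.finsetSum_coeff]
  simp only [Polynomial.coeff_X_pow_mul']

lemma euler_deriv (r m s : ℕ) : (s : ℤ) * eulerCoeff r (m + 1) s =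
    (m + 1) * ∑ k ∈ Finset.range r, if k ≤ s then (k : ℤ) * eulerCoeff r m (s - k) else 0 := by
  have key : (Polynomial.X : Polynomial ℤ) * Polynomial.derivative
      ((∑ i ∈ Finset.range r, (Polynomial.X : Polynomial ℤ) ^ i) ^ (m + 1)) =
      Polynomial.C ((m : ℤ) + 1) * ∑ k ∈ Finset.range r, Polynomial.C (k : ℤ) *
        (Polynomial.X ^ k * (∑ i ∈ Finset.range r, (Polynomial.X : Polynomial ℤ) ^ i) ^ m) := by
    have hd : (Polynomial.X : Polynomial ℤ) * Polynomial.derivative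
      (∑ i ∈ Finset.range r, (Polynomial.X : Polynomial ℤ) ^ i) =
      ∑ k ∈ Finset.range r, Polynomial.C (k : ℤ) * Polynomial.X ^ k := by
      rw [Polynomial.derivative_sum, Finset.mul_sum]
      refine Finset.sum_congr rfl fun k _ => ?_
      cases k with
      | zero => simp
      | succ k => simp [Polynomial.derivative_X_pow]; ring
    simp only [← mul_assoc, ← Finset.sum_mul]
    rw [mul_assoc, ← hd, Polynomial.derivative_pow_succ]
    simp
    ring
  have h := congrArg (fun p => Polynomial.coeff p s) key
  simp only [Polynomial.coeff_C_mul, Polynomial.finsetSum_coeff, Polynomial.coeff_X_pow_mul',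
    mul_ite, mul_zero] at h
  unfold eulerCoeff
  rw [← h]
  cases s with
  | zero => simp
  | succ s => rw [Polynomial.coeff_X_mul, Polynomial.coeff_derivative]; push_cast; ring

lemma dyck_main (r : ℕ) (hr : 1 ≤ r) (a b : ℕ) (hb : b ≤ a + 1) :
    ((a : ℤ) + 1) * (dyckF r a b).card = (a + 1 - b) * eulerCoeff r (a + 1) b := by
  induction a generalizing b with
  | zero =>
    have : b = 0 ∨ b = 1 := by omega
    rcases this with rfl | rfl
    · rw [euler_succ]
      simp [dyckF, eulerCoeff]
      omega
    · simp [dyckF]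
  | succ a ih =>
    have hpos : ((a : ℤ) + 1) ≠ 0 := by positivity
    by_cases hb2 : b ≤ a + 1
    · rw [dyck_card_succ r a b (by omega)]
      apply mul_left_cancel₀ hpos
      have e1 := euler_succ r (a + 1) b
      have e2 := euler_deriv r (a + 1) b
      have e3 : ((a : ℤ) + 1) * ((∑ k ∈ Finset.range r,
          if k ≤ b then (dyckF r a (b - k)).card else 0 : ℕ) : ℤ) =
          (a + 1 - b) * (∑ k ∈ Finset.range r,
            if k ≤ b then eulerCoeff r (a + 1) (b - k) else 0) +
          ∑ k ∈ Finset.range r,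
            if k ≤ b then (k : ℤ) * eulerCoeff r (a + 1) (b - k) else 0 := by
        push_cast
        rw [Finset.mul_sum, Finset.mul_sum, ← Finset.sum_add_distrib]
        refine Finset.sum_congr rfl fun k _ => ?_
        split_ifs with hk
        · rw [ih (b - k) (by omega)]
          push_cast [hk]
          ring
        · simp
      rw [← e1] at e3
      push_cast at e2 e3 ⊢
      linear_combination ((a : ℤ) + 1 + 1) * e3 - e2
    · have : b = a + 2 := by omega
      subst this
      have : dyckF r (a + 1) (a + 2) = ∅ := by
        ext p
        rw [dyck_mem r hr]
        simp only [Finset.notMem_empty, iff_false]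
        rintro ⟨h1, h2, h3, -⟩
        have := h3 p List.prefix_rfl
        omega
      rw [this]
      push_cast
      simp
      left; ring

/-- The number of Dyck-type paths from `(0,0)` to `(2n,0)` staying weakly above the
`x`-axis with no `r` consecutive down-steps, multiplied by `n+1`, equals
`⟨n+1 choose n⟩_r`. -/
theorem dyck_avoiding_down_runs (r : ℕ) (hr : 1 ≤ r) (n : ℕ) :
    ((n : ℤ) + 1) * dyckCount r n n = eulerCoeff r (n + 1) n := by
  have h : dyckCount r n n = (dyckF r n n).card := by
    unfold dyckCount
    rw [← Set.ncard_coe_finset]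
    congr 1
    ext p
    exact (dyck_mem r hr n n p).symm
  rw [h, dyck_main r hr n n (by omega)]
  ring
end

section
/- Let c ≥ 1 and α ≥ 0 be integers and n a natural number with n ≥ α. Then the number of tuples (a_1,…,a_n) with each a_i ∈ {0,1,…,c+1}, total sum a_1+⋯+a_n = cn−α, and partial sums a_1+⋯+a_k ≤ ck for all k = 1,…,n−1, equals the number of tuples (b_1,…,b_n) with each b_i ∈ {0,1,…,c+1}, total sum b_1+⋯+b_n = n+α, and partial sums b_1+⋯+b_k ≤ k+α for all k = 1,…,n−1. -/
/-- The number of tuples `(a 0, …, a (n-1))` with parts in `{0, 1, …, c+1}`,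
total sum `s`, and `k`-th partial sum at most `bound k` for `k = 1, …, n-1`. -/
noncomputable def restrictedCompositions (c n s : ℕ) (bound : ℕ → ℕ) : ℕ :=
  Set.ncard {a : Fin n → ℕ |
    (∀ i, a i ≤ c + 1) ∧ (∑ i, a i = s) ∧
    ∀ k : ℕ, 1 ≤ k → k ≤ n - 1 →
      (∑ i ∈ Finset.univ.filter fun i : Fin n => (i : ℕ) < k, a i) ≤ bound k}

def compRefl (c n : ℕ) (a : Fin n → ℕ) : Fin n → ℕ := fun i => c + 1 - a (Fin.rev i)

lemma compRefl_key (c n : ℕ) (a : Fin n → ℕ) (ha : ∀ i, a i ≤ c + 1) (k : ℕ) (hk : k ≤ n) :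
    (∑ i ∈ Finset.univ.filter fun i : Fin n => (i : ℕ) < k, compRefl c n a i) + ∑ i, a i
      = (c + 1) * k + ∑ i ∈ Finset.univ.filter fun i : Fin n => (i : ℕ) < n - k, a i := by
  have h1 : (∑ i ∈ Finset.univ.filter fun i : Fin n => (i : ℕ) < k, a (Fin.rev i))
      = ∑ i ∈ Finset.univ.filter fun i : Fin n => ¬ (i : ℕ) < n - k, a i := by
    refine Finset.sum_equiv Fin.revPerm ?_ ?_
    · intro i
      have := i.isLt
      simp only [Finset.mem_filter, Finset.mem_univ, true_and, Fin.revPerm_apply, Fin.val_rev]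
      omega
    · intro i _
      simp
  have h2 : (∑ i ∈ Finset.univ.filter fun i : Fin n => (i : ℕ) < k, compRefl c n a i)
      + (∑ i ∈ Finset.univ.filter fun i : Fin n => (i : ℕ) < k, a (Fin.rev i))
      = (c + 1) * k := by
    rw [← Finset.sum_add_distrib]
    rw [Finset.sum_congr rfl (g := fun _ => c + 1)]
    · rw [Finset.sum_const, Fin.card_filter_val_lt, min_eq_right hk, smul_eq_mul, mul_comm]
    · intro i _
      have := ha (Fin.rev i)
      simp only [compRefl]
      omega
  have h3 := Finset.sum_filter_add_sum_filter_not Finset.univ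
    (fun i : Fin n => (i : ℕ) < n - k) a
  omega

lemma compRefl_total (c n : ℕ) (a : Fin n → ℕ) (ha : ∀ i, a i ≤ c + 1) :
    (∑ i, compRefl c n a i) + ∑ i, a i = (c + 1) * n := by
  have := compRefl_key c n a ha n le_rfl
  simpa using this

lemma compRefl_invol (c n : ℕ) (a : Fin n → ℕ) (ha : ∀ i, a i ≤ c + 1) :
    compRefl c n (compRefl c n a) = a := by
  funext i
  have := ha i
  simp only [compRefl, Fin.rev_rev]
  omega

/-- The number of compositions of `cn - α` into `n` parts from `[0, c+1]` with
partial sums `a 1 + ⋯ + a k ≤ c k` for all `k = 1, …, n-1` equals the number of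
compositions of `n + α` into `n` parts from `[0, c+1]` with partial sums
`b 1 + ⋯ + b k ≤ k + α` for all `k = 1, …, n-1`. -/
theorem restricted_compositions_reflection (c : ℕ) (hc : 1 ≤ c) (α : ℕ) (n : ℕ)
    (hn : α ≤ n) :
    restrictedCompositions c n (c * n - α) (fun k => c * k) =
      restrictedCompositions c n (n + α) (fun k => k + α) := by
  have hcn : α ≤ c * n := hn.trans (Nat.le_mul_of_pos_left n hc)
  have hb : ∀ a : Fin n → ℕ, ∀ i, compRefl c n a i ≤ c + 1 := fun a i => Nat.sub_le _ _
  unfold restrictedCompositions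
  refine Set.ncard_congr (fun a _ => compRefl c n a) ?_ ?_ ?_
  · rintro a ⟨ha, hs, hp⟩
    have ht := compRefl_total c n a ha
    refine ⟨hb a, ?_, ?_⟩
    · rw [add_mul] at ht
      omega
    · intro k h1 h2
      have hk := compRefl_key c n a ha k (by omega)
      have hq := hp (n - k) (by omega) (by omega)
      have e : c * n = c * (n - k) + c * k := by rw [← mul_add]; congr 1; omega
      rw [add_mul] at hk
      dsimp only at hq ⊢
      omega
  · rintro a b ⟨ha, _⟩ ⟨hb', _⟩ h
    rw [← compRefl_invol c n a ha, ← compRefl_invol c n b hb']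
    exact congrArg _ h
  · rintro b ⟨ha, hs, hp⟩
    have ht := compRefl_total c n b ha
    refine ⟨compRefl c n b, ⟨hb b, ?_, ?_⟩, compRefl_invol c n b ha⟩
    · rw [add_mul] at ht
      omega
    · intro k h1 h2
      have hk := compRefl_key c n b ha k (by omega)
      have hq := hp (n - k) (by omega) (by omega)
      rw [add_mul] at hk
      dsimp only at hq ⊢
      omega
end

section
/- For every integer r ≥ 1 and every natural number n ≥ 1: the number of ballot paths to (n,n) containing no r consecutive N-steps equals the number of ballot paths to (n,n) containing no r consecutive E-steps, and (n+1) times this common value equals the Euler coefficient ⟨n+1 choose n⟩_r. Moreover t_n(n;r) = t_{n-1}(n;r). -/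
/-- `tCount r n m` is the number of ballot paths from `(0,0)` to `(n,m)`
(with `n` east-steps and `m` north-steps, staying weakly above `y = x`)
containing no `r` consecutive north-steps. -/
noncomputable def tCount (r n m : ℕ) : ℕ :=
  Set.ncard {p : List Bool |
    p.count false = n ∧ p.count true = m ∧ IsBallot p ∧ ¬ List.replicate r true <:+: p}

def goodW (R : ℕ) : ℕ → ℕ → List Bool → Prop
  | _, h, [] => h = 0
  | j, h, true :: p => 0 < j ∧ goodW R (j - 1) (h + 1) p
  | _, h, false :: p => 0 < h ∧ goodW R R (h - 1) p

lemma goodW_iff (R : ℕ) (p : List Bool) : ∀ j h, j ≤ R →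
    (goodW R j h p ↔ (∀ q : List Bool, q <+: p → q.count false ≤ h + q.count true) ∧
      p.count false = h + p.count true ∧ ¬ List.replicate (j + 1) true <+: p ∧
      ¬ List.replicate (R + 1) true <:+: p) := by
  induction p with
  | nil =>
    intro j h hj
    simp [goodW, List.replicate_succ]
    omega
  | cons b p ih =>
    intro j h hj
    have hpre : ∀ h, (∀ q : List Bool, q <+: b :: p → q.count false ≤ h + q.count true) ↔
        (∀ q : List Bool, q <+: p → (b :: q).count false ≤ h + (b :: q).count true) := by
      intro h
      constructor
      · intro H q hq
        exact H _ (by simpa using hq)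
      · intro H q hq
        rcases q with _ | ⟨c, q⟩
        · simp
        · rw [List.cons_prefix_cons] at hq
          obtain ⟨rfl, hq⟩ := hq
          exact H q hq
    rw [hpre]
    cases b with
    | false =>
      rw [List.infix_cons_iff]
      simp only [goodW, ih R (h - 1) le_rfl, List.replicate_succ, List.cons_prefix_cons]
      simp only [List.count_cons_self, List.count_cons_of_ne, ne_eq, reduceCtorEq, not_false_eq_true,
        false_and, true_and, false_or, Bool.false_eq_true, Bool.true_eq_false]
      constructor
      · rintro ⟨h0, h1, h2, h3, h4⟩
        refine ⟨fun q hq => ?_, by omega, h4⟩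
        have := h1 q hq
        omega
      · rintro ⟨h1, h2, h4⟩
        have h0 := h1 [] (by simp)
        simp at h0
        refine ⟨by omega, fun q hq => ?_, by omega, fun h5 => h4 h5.isInfix, h4⟩
        have := h1 q hq
        omega
    | true =>
      rw [List.infix_cons_iff]
      simp only [goodW]
      rcases j with _ | j
      · simp
      · rw [Nat.add_sub_cancel, ih j (h + 1) (by omega)]
        simp only [List.replicate_succ (n := j + 1), List.replicate_succ (n := R),
          List.cons_prefix_cons]
        simp only [List.count_cons_self, List.count_cons_of_ne, ne_eq, reduceCtorEq,
          not_false_eq_true, true_and, Bool.false_eq_true, Bool.true_eq_false]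
        constructor
        · rintro ⟨_, h1, h2, h3, h4⟩
          refine ⟨fun q hq => ?_, by omega, h3, ?_⟩
          · have := h1 q hq
            omega
          · rintro (h5 | h5)
            · apply h3
              refine List.IsPrefix.trans ?_ h5
              rw [List.prefix_iff_eq_take, List.take_replicate]
              simp
              omega
            · exact h4 h5
        · rintro ⟨h1, h2, h3, h4⟩
          refine ⟨by omega, fun q hq => ?_, by omega, h3, ?_⟩
          · have := h1 q hq
            omega
          · intro h5
            exact h4 (Or.inr h5)

def DS (R j h n : ℕ) : Set (List Bool) := {p | goodW R j h p ∧ p.count false = n}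

lemma goodW_count (R : ℕ) (p : List Bool) : ∀ j h, goodW R j h p →
    p.count false = h + p.count true := by
  induction p with
  | nil => intro j h H; simp [goodW] at H ⊢; omega
  | cons b p ih =>
    intro j h H
    cases b with
    | false =>
      simp only [goodW] at H
      have := ih _ _ H.2
      simp
      omega
    | true =>
      simp only [goodW] at H
      have := ih _ _ H.2
      simp
      omega

lemma DS_finite (R j h n : ℕ) : (DS R j h n).Finite := by
  apply (List.finite_length_le Bool (2 * n)).subset
  rintro p ⟨h1, h2⟩
  have := goodW_count _ _ _ _ h1
  have h3 := List.count_false_add_count_true p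
  simp only [Set.mem_ofPred_eq]
  omega

lemma DS_zero (R j h : ℕ) : (DS R j h 0).ncard = if h = 0 then 1 else 0 := by
  have : DS R j h 0 = if h = 0 then {[]} else ∅ := by
    ext p
    have h3 := List.count_false_add_count_true p
    constructor
    · rintro ⟨h1, h2⟩
      have := goodW_count _ _ _ _ h1
      have hp : p = [] := List.length_eq_zero_iff.1 (by omega)
      rw [if_pos (by omega)]
      simpa using hp
    · split_ifs with h0
      · rintro rfl
        simp [DS, goodW, h0]
      · simp
  rw [this]
  split_ifs <;> simp

lemma DS_succ (R j h n : ℕ) : (DS R j h (n + 1)).ncard =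
    (if h = 0 then 0 else (DS R R (h - 1) n).ncard) +
    (if j = 0 then 0 else (DS R (j - 1) (h + 1) (n + 1)).ncard) := by
  have : DS R j h (n + 1) =
      (if h = 0 then ∅ else (List.cons false) '' (DS R R (h - 1) n)) ∪
      (if j = 0 then ∅ else (List.cons true) '' (DS R (j - 1) (h + 1) (n + 1))) := by
    ext p
    rcases p with _ | ⟨b, p⟩
    · split_ifs <;> simp [DS]
    · cases b <;> split_ifs <;> simp [DS, goodW] <;> omega
  have f1 : (if h = 0 then ∅ else (List.cons false) '' (DS R R (h - 1) n)).Finite := by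
    split_ifs
    · simp
    · exact (DS_finite _ _ _ _).image _
  have f2 : (if j = 0 then ∅ else
      (List.cons true) '' (DS R (j - 1) (h + 1) (n + 1))).Finite := by
    split_ifs
    · simp
    · exact (DS_finite _ _ _ _).image _
  rw [this, Set.ncard_union_eq (by split_ifs <;> simp [Set.disjoint_left]) f1 f2]
  congr 1
  · split_ifs
    · simp
    · exact Set.ncard_image_of_injective _ (List.cons_injective)
  · split_ifs
    · simp
    · exact Set.ncard_image_of_injective _ (List.cons_injective)

lemma DS_sum (R n : ℕ) : ∀ j h, (DS R j h (n + 1)).ncard =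
    ∑ i ∈ Finset.range (j + 1), (if h + i = 0 then 0 else (DS R R (h + i - 1) n).ncard) := by
  intro j
  induction j with
  | zero => intro h; rw [DS_succ]; simp
  | succ j ih =>
    intro h
    rw [DS_succ, Finset.sum_range_succ', add_comm]
    simp only [Nat.add_sub_cancel, ih, Nat.add_eq_zero_iff, one_ne_zero, and_false, if_false, add_zero]
    congr 1
    apply Finset.sum_congr rfl
    intro i _
    rw [show h + 1 + i - 1 = h + (i + 1) - 1 by omega]
    simp

open Polynomial in
lemma DS_formula (R n : ℕ) : ∀ h, ((n : ℤ) + 1) * (DS R R h n).ncard =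
    (h + 1) * (X ^ h * (∑ i ∈ Finset.range (R + 1), (X : ℤ[X]) ^ i) ^ (n + 1)).coeff n := by
  induction n with
  | zero =>
    intro h
    rw [DS_zero]
    rcases h with _ | h
    · simp [Finset.sum_range_succ', coeff_zero_eq_eval_zero, eval_finset_sum]
    · simp [coeff_zero_eq_eval_zero]
  | succ n ih =>
    intro h
    set P := ∑ i ∈ Finset.range (R + 1), (X : ℤ[X]) ^ i with hP
    have e1 : ((n : ℤ) + 1) * (DS R R h (n + 1)).ncard =
        (X * derivative (X ^ h * P) * P ^ (n + 1)).coeff (n + 1) := by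
      rw [DS_sum, hP, Finset.mul_sum, derivative_sum, Finset.mul_sum, Finset.sum_mul,
        finsetSum_coeff, ← hP]
      push_cast
      rw [Finset.mul_sum]
      apply Finset.sum_congr rfl
      intro i _
      rw [← pow_add, derivative_X_pow]
      rcases Nat.eq_zero_or_pos (h + i) with h0 | h0
      · simp [h0]
      · rw [if_neg (by omega), ih, mul_assoc, coeff_X_mul, mul_assoc, coeff_C_mul]
        congr 1
        push_cast [Nat.cast_sub (show 1 ≤ h + i from h0)]
        ring
    set Q := X ^ h * P ^ (n + 1 + 1) with hQ
    have e2 : (X * derivative Q).coeff (n + 1) = ((n : ℤ) + 1) * Q.coeff (n + 1) := by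
      rw [coeff_X_mul, coeff_derivative]
      ring
    have hX : (X : ℤ[X]) * derivative (X ^ h) = C (h : ℤ) * X ^ h := by
      rcases h with _ | h
      · simp
      · rw [derivative_X_pow, Nat.add_sub_cancel]; ring
    have e3 : C ((n : ℤ) + 2) * (X * derivative (X ^ h * P) * P ^ (n + 1)) =
        X * derivative Q + C (((n : ℤ) + 1) * h) * Q := by
      rw [hQ, derivative_mul, derivative_mul, derivative_pow_succ]
      simp only [map_mul, map_add, map_natCast, map_ofNat, map_one] at hX ⊢
      push_cast
      linear_combination ((n : ℤ[X]) + 1) * P ^ (n + 2) * hX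
    have e4 := congrArg (fun p => p.coeff (n + 1)) e3
    simp only [coeff_add, coeff_C_mul, e2, ← e1] at e4
    have : (n : ℤ) + 1 ≠ 0 := by positivity
    apply mul_left_cancel₀ this
    push_cast
    linear_combination e4

lemma tCount_eq (R n : ℕ) : tCount (R + 1) n n = (DS R R 0 n).ncard := by
  unfold tCount
  congr 1
  ext p
  simp only [DS, Set.mem_ofPred_eq, goodW_iff R p R 0 le_rfl, IsBallot, zero_add]
  constructor
  · rintro ⟨h1, h2, h3, h4⟩
    exact ⟨⟨h3, by omega, fun h => h4 h.isInfix, h4⟩, h1⟩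
  · rintro ⟨⟨h3, h2, _, h4⟩, h1⟩
    exact ⟨h1, by omega, h3, h4⟩

def revc (p : List Bool) : List Bool := (p.map not).reverse

lemma revc_revc (p : List Bool) : revc (revc p) = p := by
  have : not ∘ not = id := by funext b; simp
  simp [revc, this]

lemma count_map_not (p : List Bool) (b : Bool) : (p.map not).count b = p.count (!b) := by
  have := List.count_map_of_injective p not Bool.not_injective (!b)
  simpa using this

lemma revc_count (p : List Bool) (b : Bool) : (revc p).count b = p.count (!b) := by
  simp [revc, count_map_not]

lemma revc_ballot (p : List Bool) (h : p.count false = p.count true) (hb : IsBallot p) :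
    IsBallot (revc p) := by
  rintro q ⟨s, hs⟩
  have h1 : p = revc s ++ revc q := by
    rw [← revc_revc p, ← hs]
    simp [revc]
  have h2 := hb (revc s) ⟨_, h1.symm⟩
  have h3 := congrArg (List.count true) h1
  have h4 := congrArg (List.count false) h1
  simp only [List.count_append, revc_count, Bool.not_true, Bool.not_false] at h2 h3 h4
  omega

lemma revc_infix (r : ℕ) (b : Bool) (p : List Bool) (h : List.replicate r b <:+: p) :
    List.replicate r (!b) <:+: revc p := by
  obtain ⟨s, t, rfl⟩ := h
  refine ⟨revc t, revc s, ?_⟩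
  simp [revc]

lemma t_eq_s (r n : ℕ) : tCount r n n = sCount r n n := by
  unfold tCount sCount
  have key : {p : List Bool | p.count false = n ∧ p.count true = n ∧ IsBallot p ∧
        ¬ List.replicate r false <:+: p} = revc '' {p : List Bool | p.count false = n ∧
        p.count true = n ∧ IsBallot p ∧ ¬ List.replicate r true <:+: p} := by
    ext p
    constructor
    · rintro ⟨h1, h2, h3, h4⟩
      refine ⟨revc p, ⟨by simpa [revc_count], by simpa [revc_count],
        revc_ballot p (by omega) h3, fun h => h4 ?_⟩, revc_revc p⟩
      simpa [revc_revc] using revc_infix r true _ h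
    · rintro ⟨p, ⟨h1, h2, h3, h4⟩, rfl⟩
      refine ⟨by simpa [revc_count], by simpa [revc_count],
        revc_ballot p (by omega) h3, fun h => h4 ?_⟩
      simpa [revc_revc] using revc_infix r false _ h
  rw [key, Set.ncard_image_of_injective]
  exact Function.LeftInverse.injective revc_revc

lemma t_eq_t (r n : ℕ) : tCount (r + 1) (n + 1) (n + 1) = tCount (r + 1) n (n + 1) := by
  unfold tCount
  have key : {p : List Bool | p.count false = n + 1 ∧ p.count true = n + 1 ∧ IsBallot p ∧
        ¬ List.replicate (r + 1) true <:+: p} = (fun p => p ++ [false]) ''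
        {p : List Bool | p.count false = n ∧
        p.count true = n + 1 ∧ IsBallot p ∧ ¬ List.replicate (r + 1) true <:+: p} := by
    ext p
    constructor
    · rintro ⟨h1, h2, h3, h4⟩
      rcases List.eq_nil_or_concat p with rfl | ⟨q, b, rfl⟩
      · simp at h1
      · have h5 := h3 q (by simp)
        cases b with
        | true =>
          simp at h1 h2
          omega
        | false =>
          simp at h1 h2
          refine ⟨q, ⟨by simpa using h1, by simpa using h2, ?_, ?_⟩, by simp⟩
          · intro s hs
            exact h3 s (hs.trans (by simp))
          · intro h
            exact h4 (h.trans (List.IsPrefix.isInfix (by simp)))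
    · rintro ⟨q, ⟨h1, h2, h3, h4⟩, rfl⟩
      refine ⟨by simp [h1], by simp [h2], ?_, ?_⟩
      · intro s hs
        rcases List.prefix_concat_iff.1 hs with rfl | hs
        · simp [h1, h2]
        · exact h3 s hs
      · rintro ⟨s, t, h⟩
        rcases List.eq_nil_or_concat t with rfl | ⟨t, b, rfl⟩
        · rw [List.append_nil, List.replicate_succ', ← List.append_assoc] at h
          have := List.append_inj_right' h rfl
          simp at this
        · simp only [List.concat_eq_append, ← List.append_assoc] at h
          exact h4 ⟨s, t, List.append_inj_left' h rfl⟩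
  rw [key, Set.ncard_image_of_injective]
  exact List.append_left_injective _

theorem diag_counts_agree (r : ℕ) (hr : 1 ≤ r) (n : ℕ) (hn : 1 ≤ n) :
    tCount r n n = sCount r n n ∧
    ((n : ℤ) + 1) * tCount r n n = eulerCoeff r (n + 1) n ∧
    tCount r n n = tCount r (n - 1) n := by
  obtain ⟨R, rfl⟩ : ∃ R, r = R + 1 := ⟨r - 1, by omega⟩
  refine ⟨t_eq_s _ _, ?_, ?_⟩
  · rw [tCount_eq, DS_formula]
    simp [eulerCoeff]
  · obtain ⟨m, rfl⟩ : ∃ m, n = m + 1 := ⟨n - 1, by omega⟩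
    exact t_eq_t R m
end

section
/- For every natural number n, the number of peakless Motzkin paths from (0,0) to (n,0) — lattice paths with steps u=(1,1), d=(1,-1), h=(1,0) staying weakly above the x-axis, ending on the x-axis, and containing neither the consecutive step pattern uu nor the pattern ud — equals ∑_{i=0}^{⌊n/3⌋} C(n-i, 2i) · Cat_i, where C denotes the ordinary binomial coefficient and Cat_i = (1/(i+1))·C(2i,i) is the i-th Catalan number. -/
/-- A Motzkin word: a list of `y`-increments taken from `{1, -1, 0}` (up-step
`u = (1,1)`, down-step `d = (1,-1)`, horizontal step `h = (1,0)`). The path from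
`(0,0)` to `(n,0)` stays weakly above the `x`-axis when every prefix has
nonnegative sum, and ends on the `x`-axis when the total sum is `0`. It is
peakless when it contains neither `uu` nor `ud` as consecutive steps. -/
noncomputable def peaklessMotzkinCount (n : ℕ) : ℕ :=
  Set.ncard {p : List ℤ |
    (∀ x ∈ p, x = 1 ∨ x = -1 ∨ x = 0) ∧
    p.length = n ∧ p.sum = 0 ∧
    (∀ q : List ℤ, q <+: p → 0 ≤ q.sum) ∧
    ¬ [(1 : ℤ), 1] <:+: p ∧ ¬ [(1 : ℤ), -1] <:+: p}

def PM (a : ℤ) (p : List ℤ) : Prop :=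
  (∀ x ∈ p, x = 1 ∨ x = -1 ∨ x = 0) ∧ a + p.sum = 0 ∧
    (∀ q : List ℤ, q <+: p → 0 ≤ a + q.sum) ∧
    ¬ [(1 : ℤ), 1] <:+: p ∧ ¬ [(1 : ℤ), -1] <:+: p

lemma pm_pref (a x : ℤ) (p : List ℤ) :
    (∀ q : List ℤ, q <+: (x :: p) → 0 ≤ a + q.sum) ↔
      0 ≤ a ∧ ∀ q : List ℤ, q <+: p → 0 ≤ (a + x) + q.sum := by
  constructor
  · intro h
    refine ⟨by simpa using h [] (by simp), fun q hq => ?_⟩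
    have := h (x :: q) (by simpa using hq)
    simpa [add_assoc] using this
  · rintro ⟨h0, h⟩ q hq
    rcases List.prefix_cons_iff.1 hq with rfl | ⟨t, rfl, ht⟩
    · simpa using h0
    · simpa [add_assoc] using h t ht

lemma pm_nonneg {a : ℤ} {p : List ℤ} (h : PM a p) : 0 ≤ a := by
  simpa using h.2.2.1 [] (by simp)

lemma pm_nil (a : ℤ) : PM a [] ↔ a = 0 := by
  simp only [PM]
  simp
  omega

lemma pm_zero (a : ℤ) (p : List ℤ) : PM a (0 :: p) ↔ PM a p := by
  constructor
  · intro h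
    unfold PM at h ⊢
    rw [pm_pref] at h
    simp [List.infix_cons_iff] at h
    tauto
  · intro h
    have := pm_nonneg h
    unfold PM at h ⊢
    rw [pm_pref]
    simp [List.infix_cons_iff]
    tauto

lemma pm_neg (a : ℤ) (p : List ℤ) : PM a (-1 :: p) ↔ PM (a - 1) p := by
  have e : a + -1 = a - 1 := rfl
  constructor
  · intro h
    unfold PM at h ⊢
    rw [pm_pref] at h
    simp [List.infix_cons_iff, ← add_assoc, e] at h
    tauto
  · intro h
    have h1 := pm_nonneg h
    have : 0 ≤ a := by omega
    unfold PM at h ⊢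
    rw [pm_pref]
    simp [List.infix_cons_iff, ← add_assoc, e]
    tauto

lemma pm_one (a : ℤ) (ha : 0 ≤ a) (p : List ℤ) :
    PM a (1 :: p) ↔ ∃ q, p = 0 :: q ∧ PM (a + 1) q := by
  have key : PM a (1 :: p) ↔ PM (a + 1) p ∧ ¬ [1] <+: p ∧ ¬ [-1] <+: p := by
    unfold PM
    rw [pm_pref]
    simp [List.infix_cons_iff, ← add_assoc]
    tauto
  rw [key]
  rcases p with _ | ⟨x, p⟩
  · simp [pm_nil]; omega
  · constructor
    · rintro ⟨h, h1, h2⟩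
      have hx := h.1 x (by simp)
      simp at h1 h2
      obtain rfl : x = 0 := by omega
      exact ⟨p, rfl, (pm_zero _ _).1 h⟩
    · rintro ⟨q, hq, h⟩
      simp at hq
      obtain ⟨rfl, rfl⟩ := hq
      exact ⟨(pm_zero _ _).2 h, by simp, by simp⟩

def SM (n : ℕ) (a : ℤ) : Set (List ℤ) := {p | p.length = n ∧ PM a p}

lemma sm_fin (n : ℕ) (a : ℤ) : (SM n a).Finite := by
  have : (({1, -1, 0} : Set ℤ)).Finite := by simp
  refine (List.finite_length_eq ({1, -1, 0} : Set ℤ) n).image (List.map Subtype.val) |>.subset ?_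
  rintro p ⟨hp, h⟩
  have h1 := h.1
  lift p to List ({1, -1, 0} : Set ℤ) using (by simpa using h1)
  exact ⟨p, by simpa using hp, rfl⟩

lemma sm_cons (n : ℕ) (a : ℤ) (ha : 0 ≤ a) : SM (n + 1) a =
    (List.cons 0 '' SM n a ∪ List.cons (-1) '' SM n (a - 1)) ∪ {p | p ∈ SM (n + 1) a ∧ p.head? = some 1} := by
  ext p
  constructor
  · rintro ⟨hl, h⟩
    rcases p with _ | ⟨x, p⟩
    · simp at hl
    · simp at hl
      rcases h.1 x (by simp) with rfl | rfl | rfl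
      · right; exact ⟨⟨by simpa using hl, h⟩, rfl⟩
      · left; right; exact ⟨p, ⟨hl, (pm_neg _ _).1 h⟩, rfl⟩
      · left; left; exact ⟨p, ⟨hl, (pm_zero _ _).1 h⟩, rfl⟩
  · rintro ((⟨q, ⟨hl, h⟩, rfl⟩ | ⟨q, ⟨hl, h⟩, rfl⟩) | h)
    · exact ⟨by simpa using hl, (pm_zero _ _).2 h⟩
    · exact ⟨by simpa using hl, (pm_neg _ _).2 h⟩
    · exact h.1

lemma sm_card (n : ℕ) (a : ℤ) (ha : 0 ≤ a) : (SM (n + 1) a).ncard =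
    (SM n a).ncard + (SM n (a - 1)).ncard +
      {p | p ∈ SM (n + 1) a ∧ p.head? = some 1}.ncard := by
  conv_lhs => rw [sm_cons n a ha]
  rw [Set.ncard_union_eq _ (((sm_fin _ _).image _).union ((sm_fin _ _).image _))
    ((sm_fin (n + 1) a).subset fun p hp => hp.1),
    Set.ncard_union_eq _ ((sm_fin _ _).image _) ((sm_fin _ _).image _),
    Set.ncard_image_of_injective _ List.cons_injective,
    Set.ncard_image_of_injective _ List.cons_injective]
  · rw [Set.disjoint_left]
    rintro p ⟨q, _, rfl⟩ ⟨r, _, h⟩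
    simp at h
  · rw [Set.disjoint_left]
    rintro p (⟨q, _, rfl⟩ | ⟨q, _, rfl⟩) ⟨_, h⟩ <;> simp at h

lemma sm_one (n : ℕ) (a : ℤ) (ha : 0 ≤ a) :
    {p | p ∈ SM (n + 2) a ∧ p.head? = some 1}.ncard = (SM n (a + 1)).ncard := by
  have : {p | p ∈ SM (n + 2) a ∧ p.head? = some 1} =
      List.cons 1 '' (List.cons 0 '' SM n (a + 1)) := by
    ext p
    constructor
    · rintro ⟨⟨hl, h⟩, hh⟩
      rcases p with _ | ⟨x, p⟩
      · simp at hl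
      · simp at hh
        subst hh
        obtain ⟨q, rfl, hq⟩ := (pm_one a ha _).1 h
        exact ⟨_, ⟨q, ⟨by simpa using hl, hq⟩, rfl⟩, rfl⟩
    · rintro ⟨_, ⟨q, ⟨hl, hq⟩, rfl⟩, rfl⟩
      exact ⟨⟨by simpa using hl, (pm_one a ha _).2 ⟨q, rfl, hq⟩⟩, rfl⟩
  rw [this, Set.ncard_image_of_injective _ List.cons_injective,
    Set.ncard_image_of_injective _ List.cons_injective]

lemma sm_one' (a : ℤ) (ha : 0 ≤ a) :
    {p | p ∈ SM 1 a ∧ p.head? = some 1}.ncard = 0 := by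
  have : {p | p ∈ SM 1 a ∧ p.head? = some 1} = ∅ := by
    ext p
    simp only [Set.mem_setOf_eq, Set.mem_empty_iff_false, iff_false]
    rintro ⟨⟨hl, h⟩, hh⟩
    rcases p with _ | ⟨x, p⟩
    · simp at hl
    · simp at hh
      subst hh
      obtain ⟨q, rfl, hq⟩ := (pm_one a ha _).1 h
      simp at hl
  rw [this, Set.ncard_empty]

lemma sm_neg (n : ℕ) (a : ℤ) (ha : a < 0) : (SM n a).ncard = 0 := by
  have : SM n a = ∅ := by
    ext p
    simp only [Set.mem_empty_iff_false, iff_false]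
    rintro ⟨_, h⟩
    have := pm_nonneg h
    omega
  rw [this, Set.ncard_empty]

lemma sm_zero (a : ℤ) : (SM 0 a).ncard = if a = 0 then 1 else 0 := by
  have : SM 0 a = if a = 0 then {[]} else ∅ := by
    ext p
    split_ifs with h
    · simp only [SM, Set.mem_setOf_eq, List.length_eq_zero_iff, Set.mem_singleton_iff,
        and_iff_left_iff_imp]
      rintro rfl
      exact (pm_nil _).2 h
    · simp only [SM, Set.mem_setOf_eq, List.length_eq_zero_iff, Set.mem_empty_iff_false,
        iff_false, not_and]
      rintro rfl
      rwa [pm_nil]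
  rw [this]; split_ifs <;> simp

def BB : ℕ → ℕ → ℕ
  | 0, _ => 1
  | i + 1, 0 => BB i 1
  | i + 1, a + 1 => BB (i + 1) a + BB i (a + 2)

lemma bb_closed (i : ℕ) : ∀ a, BB (i + 1) a + (2 * i + 2 + a).choose i
    = (2 * i + 2 + a).choose (i + 1) := by
  induction i with
  | zero =>
    intro a
    induction a with
    | zero => simp [BB]
    | succ a ih => simp [BB] at ih ⊢; omega
  | succ i ih =>
    intro a
    induction a with
    | zero =>
      have h := ih 1
      rw [BB]
      have e : 2 * (i + 1) + 2 + 0 = (2 * i + 2 + 1) + 1 := by ring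
      rw [e, Nat.choose_succ_succ _ i, Nat.choose_succ_succ _ (i + 1)]
      have s : (2 * i + 2 + 1).choose (i + 2) = (2 * i + 2 + 1).choose (i + 1) :=
        Nat.choose_symm_of_eq_add (by ring)
      simp only [Nat.succ_eq_add_one, add_assoc] at *
      norm_num at *
      omega
    | succ a iha =>
      have h := ih (a + 2)
      rw [BB]
      have e : 2 * (i + 1) + 2 + (a + 1) = (2 * (i + 1) + 2 + a) + 1 := by ring
      have e2 : 2 * i + 2 + (a + 2) = (2 * (i + 1) + 2 + a) := by ring
      rw [e2] at h
      rw [e, Nat.choose_succ_succ _ i, Nat.choose_succ_succ _ (i + 1)]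
      simp only [Nat.succ_eq_add_one] at *
      omega

lemma bb_cat (i : ℕ) : BB i 0 = catalan i := by
  cases i with
  | zero => simp [BB]
  | succ i =>
    have h := bb_closed i 0
    have h2 := succ_mul_catalan_eq_centralBinom (i + 1)
    have h3 := Nat.choose_succ_right_eq (2 * i + 2) i
    rw [Nat.centralBinom] at h2
    have e : 2 * i + 2 - i = i + 2 := by omega
    rw [e] at h3
    simp only [add_zero] at h
    have e2 : 2 * (i + 1) = 2 * i + 2 := by ring
    rw [e2] at h2
    have : (i + 2) * BB (i + 1) 0 = (i + 2) * catalan (i + 1) := by nlinarith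
    exact Nat.eq_of_mul_eq_mul_left (by omega) this

def FF (n a : ℕ) : ℕ := ∑ i ∈ Finset.range (n + 1), (n - i).choose (2 * i + a) * BB i a

lemma ff_ext (n a N : ℕ) (h : n / 3 + 1 ≤ N) :
    FF n a = ∑ i ∈ Finset.range N, (n - i).choose (2 * i + a) * BB i a := by
  have key : ∀ M, n / 3 + 1 ≤ M → ∑ i ∈ Finset.range M, (n - i).choose (2 * i + a) * BB i a
     = ∑ i ∈ Finset.range (n / 3 + 1), (n - i).choose (2 * i + a) * BB i a := by
    intro M hM
    symm
    apply Finset.sum_subset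
    · intro x hx; simp at *; omega
    · intro x _ hx
      simp at hx
      rw [Nat.choose_eq_zero_of_lt (by omega), zero_mul]
  rw [FF, key _ (by omega), key _ h]

lemma ff_rec0 (n : ℕ) : FF (n + 2) 0 = FF (n + 1) 0 + FF n 1 := by
  rw [ff_ext (n + 2) 0 (n + 2) (by omega), ff_ext (n + 1) 0 (n + 2) (by omega), FF,
    Finset.sum_range_succ' _ (n + 1), Finset.sum_range_succ' _ (n + 1), add_right_comm,
    ← Finset.sum_add_distrib]
  congr 1
  · apply Finset.sum_congr rfl
    intro i hi
    simp at hi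
    have e : n + 2 - (i + 1) = (n - i) + 1 := by omega
    have e1 : n + 1 - (i + 1) = n - i := by omega
    have e2 : 2 * (i + 1) + 0 = (2 * i + 1) + 1 := by ring
    rw [e, e1, e2, Nat.choose_succ_succ, BB]
    simp only [Nat.succ_eq_add_one]
    ring

lemma ff_rec (n a : ℕ) : FF (n + 2) (a + 1) = FF (n + 1) (a + 1) + FF (n + 1) a + FF n (a + 2) := by
  rw [ff_ext (n + 2) _ (n + 2) (by omega), ff_ext (n + 1) (a + 1) (n + 2) (by omega),
    ff_ext (n + 1) a (n + 2) (by omega), FF,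
    Finset.sum_range_succ' _ (n + 1), Finset.sum_range_succ' _ (n + 1),
    Finset.sum_range_succ' _ (n + 1)]
  have : ∑ i ∈ Finset.range (n + 1), (n + 2 - (i + 1)).choose (2 * (i + 1) + (a + 1)) * BB (i + 1) (a + 1)
    = ∑ i ∈ Finset.range (n + 1), (n + 1 - (i + 1)).choose (2 * (i + 1) + (a + 1)) * BB (i + 1) (a + 1)
    + ∑ i ∈ Finset.range (n + 1), (n + 1 - (i + 1)).choose (2 * (i + 1) + a) * BB (i + 1) a
    + ∑ i ∈ Finset.range (n + 1), (n - i).choose (2 * i + (a + 2)) * BB i (a + 2) := by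
    rw [← Finset.sum_add_distrib, ← Finset.sum_add_distrib]
    apply Finset.sum_congr rfl
    intro i hi
    simp at hi
    have e : n + 2 - (i + 1) = (n - i) + 1 := by omega
    have e1 : n + 1 - (i + 1) = n - i := by omega
    have e2 : 2 * (i + 1) + (a + 1) = (2 * i + (a + 2)) + 1 := by ring
    have e3 : 2 * (i + 1) + a = (2 * i + (a + 2)) := by ring
    rw [e, e1, e2, e3, Nat.choose_succ_succ, BB]
    simp only [Nat.succ_eq_add_one]
    ring
  rw [this]
  have h0 : (n + 2 - 0).choose (2 * 0 + (a + 1)) =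
      (n + 1 - 0).choose (2 * 0 + (a + 1)) + (n + 1 - 0).choose (2 * 0 + a) := by
    simp only [Nat.sub_zero, mul_zero, zero_add]
    rw [Nat.choose_succ_succ, add_comm]
  rw [h0]
  simp only [BB]
  ring

lemma sm_ff (n : ℕ) : ∀ a : ℕ, (SM n a).ncard = FF n a := by
  induction n using Nat.strong_induction_on with
  | _ n ih =>
    rcases n with _ | _ | n
    · intro a
      rw [sm_zero]
      cases a <;> simp [FF, BB]
      omega
    · intro a
      rw [sm_card 0 a (by omega), sm_one' _ (by omega), sm_zero, sm_zero,
        ff_ext 1 a 1 (by omega)]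
      rcases a with _ | _ | a
      · simp [BB]
      · simp [BB]
      · simp [BB, Nat.choose_eq_zero_of_lt]
        omega
    · intro a
      rw [sm_card (n + 1) a (by omega), sm_one n _ (by omega), ih (n + 1) (by omega)]
      have h1 := ih n (by omega) (a + 1)
      push_cast at h1
      rw [h1]
      rcases a with _ | a
      · rw [sm_neg _ _ (by simp), ff_rec0]; simp
      · have h2 := ih (n + 1) (by omega) a
        have e : ((a + 1 : ℕ) : ℤ) - 1 = a := by push_cast; ring
        rw [e, h2, ff_rec]

theorem peakless_motzkin_count (n : ℕ) :
    peaklessMotzkinCount n =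
      ∑ i ∈ Finset.range (n / 3 + 1), (n - i).choose (2 * i) * catalan i := by
  have h := sm_ff n 0
  rw [ff_ext n 0 _ le_rfl] at h
  simp only [bb_cat, add_zero] at h
  rw [← h, peaklessMotzkinCount]
  congr 1
  ext p
  simp only [SM, PM, Set.mem_setOf_eq, Nat.cast_zero, zero_add]
  tauto
end
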